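/- For every k ∈ ℤ≥0, the supremum over all n ∈ ℤ>0 and ξ ∈ ℍ of n^{m/2−1}·(Im ξ)^{m/2+k}·|ψ_n^{(k)}(ξ)| is finite, where ψ_n^{(k)} denotes the k-th complex derivative of ψ_n. -/

import Mathlib

open Complex MeasureTheory Filter Topology
open scoped Real

set_option autoImplicit false

noncomputable section

/-- `SL₂(ℤ)`. -/
abbrev SL2Z := Matrix.SpecialLinearGroup (Fin 2) ℤ

/-- The upper half-plane, as a subset of `ℂ`. -/
def UH : Set ℂ := {z : ℂ | 0 < z.im}

/-- The `(i,j)` entry of `γ ∈ SL₂(ℤ)`, as a complex number. -/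
def entry (γ : SL2Z) (i j : Fin 2) : ℂ :=
  ((γ : Matrix (Fin 2) (Fin 2) ℤ) i j : ℂ)

/-- The Möbius action of `SL₂(ℤ)` on the upper half-plane (as a map on `ℂ`). -/
def act (γ : SL2Z) (z : ℂ) : ℂ :=
  (entry γ 0 0 * z + entry γ 0 1) / (entry γ 1 0 * z + entry γ 1 1)

/-- The hyperbolic measure `dv(x+iy) = dx·dy/y²` on the upper half-plane. -/
def hypMeasure : Measure ℂ :=
  ((volume : Measure ℂ).withDensity fun z => ENNReal.ofReal (1 / z.im ^ 2)).restrict UH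

/-- A multiplier system on `Γ`: holomorphic square roots `η_γ` of `z ↦ c_γ z + d_γ`
satisfying the cocycle condition. -/
structure IsMultiplierSystem (Γ : Subgroup SL2Z) (η : Γ → ℂ → ℂ) : Prop where
  holo : ∀ γ : Γ, DifferentiableOn ℂ (η γ) UH
  sq : ∀ γ : Γ, ∀ z ∈ UH, η γ z ^ 2 = entry (γ : SL2Z) 1 0 * z + entry (γ : SL2Z) 1 1
  cocycle : ∀ γ₁ γ₂ : Γ, ∀ z ∈ UH,
    η (γ₁ * γ₂) z = η γ₁ (act (γ₂ : SL2Z) z) * η γ₂ z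

/-- `χ` has finite order. -/
def HasFiniteOrderChar (Γ : Subgroup SL2Z) (χ : Γ →* ℂˣ) : Prop :=
  ∃ n : ℕ, 0 < n ∧ ∀ γ : Γ, χ γ ^ n = 1

/-- `f` is a cusp form of weight `m = 5/2 + j` for `(Γ, η, χ)`; here
`η γ z ^ (-(5 + 2j))` is the integer power `η_γ(z)^{-2m}`, and the boundedness of
`‖f‖·(Im z)^{m/2}` on the upper half-plane expresses the vanishing at all cusps. -/
def IsCuspForm (Γ : Subgroup SL2Z) (η : Γ → ℂ → ℂ) (χ : Γ →* ℂˣ) (m : ℝ) (j : ℕ)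
    (f : ℂ → ℂ) : Prop :=
  DifferentiableOn ℂ f UH ∧
  (∀ γ : Γ, ∀ z ∈ UH,
    f (act (γ : SL2Z) z) * η γ z ^ (-(5 + 2 * (j : ℤ))) = (χ γ : ℂ) * f z) ∧
  ∃ C : ℝ, ∀ z ∈ UH, ‖f z‖ * z.im ^ (m / 2) ≤ C

/-- A measurable fundamental domain for the action of `Γ` on the upper half-plane,
with respect to the hyperbolic measure. -/
def IsFundDom (Γ : Subgroup SL2Z) (F : Set ℂ) : Prop :=
  MeasurableSet F ∧ F ⊆ UH ∧
  hypMeasure (UH \ ⋃ γ : Γ, act (γ : SL2Z) '' F) = 0 ∧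
  ∀ γ : Γ, γ ≠ 1 → hypMeasure (F ∩ act (γ : SL2Z) '' F) = 0

/-- The term of the classical Poincaré series `ψ_n`. -/
def psiTerm (Γ : Subgroup SL2Z) (η : Γ → ℂ → ℂ) (χ : Γ →* ℂˣ) (j : ℕ) (h : ℕ) (n : ℕ)
    (γ : Γ) (z : ℂ) : ℂ :=
  (starRingEnd ℂ) (χ γ : ℂ) *
    Complex.exp (2 * (π : ℂ) * I * (n : ℂ) * act (γ : SL2Z) z / (h : ℂ)) *
    η γ z ^ (-(5 + 2 * (j : ℤ)))

/-- The classical Poincaré series `ψ_n`, summed over a set `R` of representatives of the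
right cosets of `Γ_∞` in `Γ`. -/
def psi (Γ : Subgroup SL2Z) (η : Γ → ℂ → ℂ) (χ : Γ →* ℂˣ) (j : ℕ) (h : ℕ) (R : Set Γ)
    (n : ℕ) (z : ℂ) : ℂ :=
  ∑' δ : R, psiTerm Γ η χ j h n (δ : Γ) z

/-!
Cauchy's estimate on the disc of radius `Im ξ / 2` reduces the bound for `ψ_n^(k)` to `k = 0`, where
the triangle inequality suffices. In absolute value the term of `ψ_n` at `γ`, multiplied by
`n^(m/2-1) (Im z)^(m/2)`, depends on the point `γ • z` only, so a bound uniform over all families of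
matrices with distinct bottom rows is `SL₂(ℤ)`-invariant in `z` and may be proved for
`Im z ≥ 1/2`. There, with `s = m/2` and `z = x + iy`, one has

* `t^s exp(-a t) ≪ (1 + t⁻¹)^(-s)` for `t = n Im (γ • z)`, and
* `t⁻¹ = u² + v²` with `u = c / √(n/y)` and `v = (d + c x) / √(n y)`.

As `(1 + u² + v²)² ≥ (1 + u²)(1 + v²)`, the sum over `(c, d)` with `c ≠ 0` separates into two
one-dimensional sums, comparable to `√(n/y)` and `√(n y)` times the integral of `(1 + u²)^(-s/2)`,
which converges because `s > 1`. The product of the two scales is `n`, which cancels the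
remaining factor `n⁻¹`. The rows with `c = 0` are `(0, 1)` and `(0, -1)`.
-/

section InvBracket

open scoped ENNReal

/-- The power `⟨u⟩^(-2p)` of the Japanese bracket `⟨u⟩ = √(1 + u²)`. It takes values in `ℝ≥0∞`
so that sums and integrals of it can be compared before they are known to converge. -/
def invBracket (p u : ℝ) : ℝ≥0∞ := ENNReal.ofReal ((1 + u ^ 2) ^ (-p))

variable {p : ℝ}

@[fun_prop]
lemma measurable_invBracket : Measurable (invBracket p) := by
  unfold invBracket
  fun_prop

lemma lintegral_invBracket_ne_top (hp : 1 / 2 < p) : ∫⁻ u, invBracket p u ≠ ∞ := by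
  have integrable_norm := integrable_rpow_neg_one_add_norm_sq (E := ℝ) (μ := volume) (r := 2 * p)
    (by rw [Module.finrank_self]; push_cast; linarith)
  have rpow_eq (u : ℝ) : (1 + ‖u‖ ^ 2) ^ (-(2 * p) / 2) = (1 + u ^ 2) ^ (-p) := by
    rw [Real.norm_eq_abs, sq_abs]
    ring_nf
  simp only [rpow_eq] at integrable_norm
  exact integrable_norm.lintegral_lt_top.ne

lemma lintegral_comp_add_div {f : ℝ → ℝ≥0∞} (hf : Measurable f) {K : ℝ} (hK : 0 < K) (α : ℝ) :
    ∫⁻ t, f ((t + α) / K) = ENNReal.ofReal K * ∫⁻ u, f u := by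
  calc ∫⁻ t, f ((t + α) / K)
      = ∫⁻ t, f (t / K) := lintegral_add_right_eq_self (fun t ↦ f (t / K)) α
    _ = ∫⁻ t, f (K⁻¹ * t) := by simp only [div_eq_inv_mul]
    _ = ∫⁻ u, f u ∂(volume.map (K⁻¹ * ·)) := (lintegral_map hf (by fun_prop)).symm
    _ = ENNReal.ofReal K * ∫⁻ u, f u := by
        rw [Real.map_volume_mul_left (inv_ne_zero hK.ne'), lintegral_smul_measure, inv_inv,
          abs_of_pos hK, smul_eq_mul]

lemma tsum_int_le_lintegral {f : ℤ → ℝ≥0∞} {g : ℝ → ℝ≥0∞}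
    (hfg : ∀ d : ℤ, ∀ t ∈ Set.Ico (d : ℝ) (d + 1), f d ≤ g t) :
    ∑' d, f d ≤ ∫⁻ t, g t := by
  calc ∑' d, f d
      = ∑' d : ℤ, ∫⁻ _ in Set.Ico (d : ℝ) (d + 1), f d := by simp
    _ ≤ ∑' d : ℤ, ∫⁻ t in Set.Ico (d : ℝ) (d + 1), g t :=
        ENNReal.tsum_le_tsum fun d ↦ setLIntegral_mono' measurableSet_Ico (hfg d)
    _ = ∫⁻ t, g t := by
        rw [← lintegral_iUnion (fun _ ↦ measurableSet_Ico) (Set.pairwise_disjoint_Ico_intCast ℝ),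
          iUnion_Ico_intCast, setLIntegral_univ]

lemma invBracket_le_mul (hp : 0 ≤ p) {A u v : ℝ} (hA : 0 < A)
    (huv : 1 + v ^ 2 ≤ A * (1 + u ^ 2)) :
    invBracket p u ≤ ENNReal.ofReal (A ^ p) * invBracket p v := by
  rw [invBracket, invBracket, ← ENNReal.ofReal_mul (by positivity)]
  refine ENNReal.ofReal_le_ofReal ?_
  calc (1 + u ^ 2) ^ (-p)
      = A ^ p * (A * (1 + u ^ 2)) ^ (-p) := by
        rw [Real.mul_rpow hA.le (by positivity), ← mul_assoc, ← Real.rpow_add hA, add_neg_cancel,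
          Real.rpow_zero, one_mul]
    _ ≤ A ^ p * (1 + v ^ 2) ^ (-p) := by
        gcongr ?_ * ?_
        exact Real.rpow_le_rpow_of_nonpos (by positivity) huv (neg_nonpos.2 hp)

lemma ofReal_rpow_neg_le_invBracket_mul {s : ℝ} (hs : 0 ≤ s) (u v : ℝ) :
    ENNReal.ofReal ((1 + (u ^ 2 + v ^ 2)) ^ (-s)) ≤
      invBracket (s / 2) u * invBracket (s / 2) v := by
  rw [invBracket, invBracket, ← ENNReal.ofReal_mul (by positivity),
    ← Real.mul_rpow (by positivity) (by positivity)]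
  refine ENNReal.ofReal_le_ofReal ?_
  calc (1 + (u ^ 2 + v ^ 2)) ^ (-s)
      = ((1 + (u ^ 2 + v ^ 2)) ^ 2) ^ (-(s / 2)) := by
        rw [← Real.rpow_natCast_mul (by positivity)]
        push_cast
        ring_nf
    _ ≤ ((1 + u ^ 2) * (1 + v ^ 2)) ^ (-(s / 2)) :=
        Real.rpow_le_rpow_of_nonpos (by positivity) (by nlinarith [sq_nonneg u, sq_nonneg v])
          (by linarith)

lemma tsum_invBracket_add_div_le (hp : 0 ≤ p) {K : ℝ} (hK : 0 < K) (hK2 : 1 / 2 ≤ K ^ 2)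
    (α : ℝ) :
    ∑' d : ℤ, invBracket p ((d + α) / K) ≤
      ENNReal.ofReal (5 ^ p) * (ENNReal.ofReal K * ∫⁻ u, invBracket p u) := by
  rw [← lintegral_comp_add_div measurable_invBracket hK α,
    ← lintegral_const_mul _ (by fun_prop)]
  refine tsum_int_le_lintegral fun d t ht ↦ invBracket_le_mul hp (by norm_num) ?_
  have numerator_le : (t + α) ^ 2 ≤ 2 * (d + α) ^ 2 + 4 * K ^ 2 := by
    nlinarith [sq_nonneg (t + α - 2 * (d + α)), ht.1, ht.2]
  have shifted_le : ((t + α) / K) ^ 2 ≤ 2 * ((d + α) / K) ^ 2 + 4 := by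
    calc ((t + α) / K) ^ 2
        ≤ (2 * (d + α) ^ 2 + 4 * K ^ 2) / K ^ 2 := by rw [div_pow]; gcongr
      _ = 2 * ((d + α) / K) ^ 2 + 4 := by field_simp
  linarith [sq_nonneg ((d + α) / K)]

-- Omitting `c = 0` is what allows `K` to be arbitrarily small here.
lemma tsum_ne_zero_invBracket_div_le (hp : 0 ≤ p) {K : ℝ} (hK : 0 < K) :
    ∑' c : ℤ, (if c = 0 then 0 else invBracket p (c / K)) ≤
      ENNReal.ofReal (4 ^ p) * (ENNReal.ofReal K * ∫⁻ u, invBracket p u) := by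
  rw [← lintegral_comp_add_div measurable_invBracket hK 0,
    ← lintegral_const_mul _ (by fun_prop)]
  refine tsum_int_le_lintegral fun c t ht ↦ ?_
  split_ifs with hc
  · exact zero_le
  refine invBracket_le_mul hp (by norm_num) ?_
  have sq_le : t ^ 2 ≤ 4 * (c : ℝ) ^ 2 := by
    rcases lt_or_gt_of_ne hc with hneg | hpos
    · have : (c : ℝ) + 1 ≤ 0 := by exact_mod_cast hneg
      nlinarith [ht.1, ht.2]
    · have : (1 : ℝ) ≤ c := by exact_mod_cast hpos
      nlinarith [ht.1, ht.2]
  calc 1 + ((t + 0) / K) ^ 2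
      ≤ 4 * 1 + 4 * (c : ℝ) ^ 2 / K ^ 2 := by
        rw [add_zero, div_pow]
        gcongr
        norm_num
    _ = 4 * (1 + (c / K) ^ 2) := by ring

end InvBracket

section OrbitSum

open scoped ENNReal UpperHalfPlane

/-- The weight `N^(s-1) (Im τ)^s exp(-a N Im τ)` of a point `τ` of the upper half-plane: the
absolute value of the seed of the `N`-th Poincaré series of weight `2s`, in its natural
normalisation. -/
def poincareWeight (a s N : ℝ) (τ : ℍ) : ℝ≥0∞ :=
  ENNReal.ofReal (N ^ (s - 1) * (τ.im ^ s * Real.exp (-(a * (N * τ.im)))))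

/-- An upper bound, in terms of the bottom row `(c, d)` of `γ ∈ SL₂(ℤ)`, for the weight
`N⁻¹ (1 + (N Im (γ • w))⁻¹)^(-2p)` of the orbit of `w`. Coprimality of `c` and `d` is built in
for `c = 0` only, the other rows being summable without it. -/
def rowMajorant (p N : ℝ) (w : ℍ) (c d : ℤ) : ℝ≥0∞ :=
  if c = 0 then (if IsUnit d then 1 else 0)
  else ENNReal.ofReal N⁻¹ *
    (invBracket p (c / √(N / w.im)) * invBracket p ((d + c * w.re) / √(N * w.im)))

variable {a s p N : ℝ}

lemma one_add_rpow_le_mul_exp (ha : 0 < a) (hs : 0 < s) {x : ℝ} (hx : 0 ≤ x) :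
    (1 + x) ^ s ≤ (1 + s / a) ^ s * Real.exp (a * x) := by
  have one_add_le : 1 + x ≤ (1 + s / a) * Real.exp (a * x / s) := by
    calc 1 + x ≤ (1 + s / a) * (a * x / s + 1) := by
          have expand : (1 + s / a) * (a * x / s + 1) = 1 + x + (a * x / s + s / a) := by
            field_simp
            ring
          rw [expand]
          exact le_add_of_nonneg_right (by positivity)
      _ ≤ (1 + s / a) * Real.exp (a * x / s) := by gcongr; exact Real.add_one_le_exp _
  calc (1 + x) ^ s ≤ ((1 + s / a) * Real.exp (a * x / s)) ^ s := by gcongr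
    _ = (1 + s / a) ^ s * Real.exp (a * x) := by
      rw [Real.mul_rpow (by positivity) (by positivity), ← Real.exp_mul, div_mul_cancel₀ _ hs.ne']

lemma rpow_mul_exp_neg_le (ha : 0 < a) (hs : 0 < s) {x : ℝ} (hx : 0 < x) :
    x ^ s * Real.exp (-(a * x)) ≤ (1 + s / a) ^ s * (1 + x⁻¹) ^ (-s) := by
  have factor : (1 + x⁻¹) ^ (-s) = x ^ s / (1 + x) ^ s := by
    rw [← Real.div_rpow hx.le (by positivity), Real.rpow_neg (by positivity),
      ← Real.inv_rpow (by positivity)]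
    congr 1
    field_simp
    ring
  rw [factor, Real.exp_neg, ← div_eq_mul_inv, ← mul_div_assoc,
    div_le_div_iff₀ (by positivity) (by positivity)]
  calc x ^ s * (1 + x) ^ s ≤ x ^ s * ((1 + s / a) ^ s * Real.exp (a * x)) := by
        gcongr
        exact one_add_rpow_le_mul_exp ha hs hx.le
    _ = (1 + s / a) ^ s * x ^ s * Real.exp (a * x) := by ring

lemma poincareWeight_le (ha : 0 < a) (hs : 0 < s) (hN : 0 < N) (τ : ℍ) :
    poincareWeight a s N τ ≤ ENNReal.ofReal ((1 + s / a) ^ s) *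
      (ENNReal.ofReal N⁻¹ * ENNReal.ofReal ((1 + (N * τ.im)⁻¹) ^ (-s))) := by
  have him := τ.im_pos
  rw [← ENNReal.ofReal_mul (by positivity), ← ENNReal.ofReal_mul (by positivity)]
  refine ENNReal.ofReal_le_ofReal ?_
  calc N ^ (s - 1) * (τ.im ^ s * Real.exp (-(a * (N * τ.im))))
      = N⁻¹ * ((N * τ.im) ^ s * Real.exp (-(a * (N * τ.im)))) := by
        rw [Real.rpow_sub_one hN.ne', Real.mul_rpow hN.le him.le]
        ring
    _ ≤ N⁻¹ * ((1 + s / a) ^ s * (1 + (N * τ.im)⁻¹) ^ (-s)) := by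
        gcongr N⁻¹ * ?_
        exact rpow_mul_exp_neg_le ha hs (by positivity)
    _ = (1 + s / a) ^ s * (N⁻¹ * (1 + (N * τ.im)⁻¹) ^ (-s)) := by ring

lemma inv_mul_im_smul (hN : 0 < N) (γ : SL2Z) (w : ℍ) :
    (N * (γ • w).im)⁻¹ =
      (γ 1 0 / √(N / w.im)) ^ 2 + ((γ 1 1 + γ 1 0 * w.re) / √(N * w.im)) ^ 2 := by
  have normSq_denom : Complex.normSq (UpperHalfPlane.denom γ w) =
      (γ 1 1 + γ 1 0 * w.re) ^ 2 + (γ 1 0) ^ 2 * w.im ^ 2 := by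
    rw [ModularGroup.denom_apply, Complex.normSq_apply]
    simp only [Complex.add_re, Complex.add_im, Complex.mul_re, Complex.mul_im, Complex.intCast_re,
      Complex.intCast_im, UpperHalfPlane.coe_re, UpperHalfPlane.coe_im]
    ring
  rw [ModularGroup.im_smul_eq_div_normSq, normSq_denom, div_pow, div_pow,
    Real.sq_sqrt (by positivity), Real.sq_sqrt (by positivity), ← mul_div_assoc, inv_div]
  field_simp
  ring

lemma poincareWeight_smul_le_rowMajorant (ha : 0 < a) (hs : 0 < s) (hN : 1 ≤ N) (γ : SL2Z)
    (w : ℍ) :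
    poincareWeight a s N (γ • w) ≤
      ENNReal.ofReal ((1 + s / a) ^ s) * rowMajorant (s / 2) N w (γ 1 0) (γ 1 1) := by
  have hN₀ : 0 < N := one_pos.trans_le hN
  refine (poincareWeight_le ha hs hN₀ _).trans ?_
  gcongr
  by_cases hc : γ 1 0 = 0
  · have isUnit_d : IsUnit (γ 1 1) := isCoprime_zero_left.1 (hc ▸ ModularGroup.bottom_row_coprime γ)
    rw [rowMajorant, if_pos hc, if_pos isUnit_d]
    refine mul_le_one' (ENNReal.ofReal_le_one.2 (inv_le_one_of_one_le₀ hN))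
      (ENNReal.ofReal_le_one.2 (Real.rpow_le_one_of_one_le_of_nonpos ?_ (neg_nonpos.2 hs.le)))
    exact le_add_of_nonneg_right (by positivity)
  · rw [rowMajorant, if_neg hc, inv_mul_im_smul hN₀]
    gcongr
    exact ofReal_rpow_neg_le_invBracket_mul hs.le _ _

lemma tsum_rowMajorant_zero_le (p N : ℝ) (w : ℍ) : ∑' d, rowMajorant p N w 0 d ≤ 2 := by
  calc ∑' d, rowMajorant p N w 0 d
      ≤ ∑' d : ℤ, ((if d = 1 then 1 else 0) + if d = -1 then 1 else 0) := by
        refine ENNReal.tsum_le_tsum fun d ↦ ?_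
        rw [rowMajorant, if_pos rfl]
        split_ifs with isUnit_d <;> simp_all [Int.isUnit_iff]
    _ = 2 := by
        rw [ENNReal.tsum_add, tsum_ite_eq, tsum_ite_eq, one_add_one_eq_two]

lemma tsum_rowMajorant_ne_zero_le (hp : 0 ≤ p) (hN : 1 ≤ N) {w : ℍ} (hw : 1 / 2 ≤ w.im) :
    ∑' c, (if c = 0 then 0 else ∑' d, rowMajorant p N w c d) ≤
      ENNReal.ofReal (4 ^ p) * ENNReal.ofReal (5 ^ p) * (∫⁻ u, invBracket p u) ^ 2 := by
  have him := w.im_pos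
  have hN₀ : 0 < N := one_pos.trans_le hN
  set L := √(N / w.im) with hL
  set K := √(N * w.im) with hK
  have hL₀ : 0 < L := Real.sqrt_pos.2 (by positivity)
  have hK₀ : 0 < K := Real.sqrt_pos.2 (by positivity)
  have half_le_sq : 1 / 2 ≤ K ^ 2 := by
    rw [hK, Real.sq_sqrt (by positivity)]
    nlinarith
  have inv_mul_mul : N⁻¹ * (L * K) = 1 := by
    rw [hL, hK, ← Real.sqrt_mul (by positivity), div_mul_eq_mul_div, mul_left_comm,
      ← mul_assoc, mul_div_cancel_right₀ _ him.ne', Real.sqrt_mul_self hN₀.le,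
      inv_mul_cancel₀ hN₀.ne']
  set I := ∫⁻ u, invBracket p u
  calc ∑' c, (if c = 0 then 0 else ∑' d, rowMajorant p N w c d)
      = ∑' c : ℤ, ENNReal.ofReal N⁻¹ * ((if c = 0 then 0 else invBracket p (c / L)) *
          ∑' d : ℤ, invBracket p ((d + c * w.re) / K)) := by
        refine tsum_congr fun c ↦ ?_
        by_cases hc : c = 0
        · simp only [hc, if_true, zero_mul, mul_zero]
        · simp only [rowMajorant, hc, if_false, ENNReal.tsum_mul_left, ← hL, ← hK]
    _ ≤ ∑' c : ℤ, ENNReal.ofReal N⁻¹ * ((if c = 0 then 0 else invBracket p (c / L)) *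
          (ENNReal.ofReal (5 ^ p) * (ENNReal.ofReal K * I))) := by
        gcongr
        exact tsum_invBracket_add_div_le hp hK₀ half_le_sq _
    _ ≤ ENNReal.ofReal N⁻¹ * ((ENNReal.ofReal (4 ^ p) * (ENNReal.ofReal L * I)) *
          (ENNReal.ofReal (5 ^ p) * (ENNReal.ofReal K * I))) := by
        rw [ENNReal.tsum_mul_left, ENNReal.tsum_mul_right]
        gcongr
        exact tsum_ne_zero_invBracket_div_le hp hL₀
    _ = ENNReal.ofReal (N⁻¹ * (L * K)) *
          (ENNReal.ofReal (4 ^ p) * ENNReal.ofReal (5 ^ p) * I ^ 2) := by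
        rw [ENNReal.ofReal_mul (by positivity), ENNReal.ofReal_mul hL₀.le]
        ring
    _ = ENNReal.ofReal (4 ^ p) * ENNReal.ofReal (5 ^ p) * I ^ 2 := by
        rw [inv_mul_mul, ENNReal.ofReal_one, one_mul]

lemma tsum_rowMajorant_le (hp : 0 ≤ p) (hN : 1 ≤ N) {w : ℍ} (hw : 1 / 2 ≤ w.im) :
    ∑' (c) (d), rowMajorant p N w c d ≤
      2 + ENNReal.ofReal (4 ^ p) * ENNReal.ofReal (5 ^ p) * (∫⁻ u, invBracket p u) ^ 2 := by
  calc ∑' (c) (d), rowMajorant p N w c d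
      = ∑' d, rowMajorant p N w 0 d + ∑' c, if c = 0 then 0 else ∑' d, rowMajorant p N w c d := by
        convert ENNReal.tsum_eq_add_tsum_ite (0 : ℤ)
    _ ≤ _ := add_le_add (tsum_rowMajorant_zero_le p N w) (tsum_rowMajorant_ne_zero_le hp hN hw)

variable {ι : Type*}

lemma tsum_poincareWeight_le_tsum_rowMajorant (ha : 0 < a) (hs : 0 < s) (hN : 1 ≤ N)
    {g : ι → SL2Z} (hg : Function.Injective fun i ↦ g i 1) (w : ℍ) :
    ∑' i, poincareWeight a s N (g i • w) ≤
      ENNReal.ofReal ((1 + s / a) ^ s) * ∑' (c) (d), rowMajorant (s / 2) N w c d := by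
  have injective_row : Function.Injective fun i ↦ (g i 1 0, g i 1 1) :=
    (finTwoArrowEquiv ℤ).injective.comp hg
  calc ∑' i, poincareWeight a s N (g i • w)
      ≤ ∑' i, ENNReal.ofReal ((1 + s / a) ^ s) * rowMajorant (s / 2) N w (g i 1 0) (g i 1 1) :=
        ENNReal.tsum_le_tsum fun i ↦ poincareWeight_smul_le_rowMajorant ha hs hN (g i) w
    _ ≤ ENNReal.ofReal ((1 + s / a) ^ s) * ∑' (c) (d), rowMajorant (s / 2) N w c d := by
        rw [ENNReal.tsum_mul_left, ← ENNReal.tsum_prod]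
        gcongr
        exact ENNReal.tsum_comp_le_tsum_of_injective injective_row
          fun q ↦ rowMajorant (s / 2) N w q.1 q.2

lemma injective_row_mul_right {g : ι → SL2Z} (hg : Function.Injective fun i ↦ g i 1) (σ : SL2Z) :
    Function.Injective fun i ↦ (g i * σ) 1 := by
  have isUnit_coe : IsUnit (σ : Matrix (Fin 2) (Fin 2) ℤ) := by
    simp [Matrix.isUnit_iff_isUnit_det]
  have row_mul (i : ι) : (g i * σ) 1 = Matrix.vecMul (g i 1) σ := Matrix.mul_apply_eq_vecMul _ _ 1
  simp only [row_mul]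
  exact (Matrix.vecMul_injective_of_isUnit isUnit_coe).comp hg

theorem exists_tsum_poincareWeight_smul_le (ha : 0 < a) (hs : 1 < s) :
    ∃ C ≠ ∞, ∀ N : ℝ, 1 ≤ N → ∀ z : ℍ, ∀ g : ι → SL2Z, (Function.Injective fun i ↦ g i 1) →
      ∑' i, poincareWeight a s N (g i • z) ≤ C := by
  have integral_ne_top := lintegral_invBracket_ne_top (p := s / 2) (by linarith)
  refine ⟨ENNReal.ofReal ((1 + s / a) ^ s) * (2 + ENNReal.ofReal (4 ^ (s / 2)) *
    ENNReal.ofReal (5 ^ (s / 2)) * (∫⁻ u, invBracket (s / 2) u) ^ 2), by finiteness,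
    fun N hN z g hg ↦ ?_⟩
  -- A set of distinct bottom rows stays so under `γ ↦ γ σ⁻¹`, so `z` may be replaced by `σ • z`.
  obtain ⟨σ, hσ⟩ := ModularGroup.exists_one_half_le_im_smul z
  calc ∑' i, poincareWeight a s N (g i • z)
      = ∑' i, poincareWeight a s N ((g i * σ⁻¹) • σ • z) := by
        simp only [smul_smul, inv_mul_cancel_right]
    _ ≤ ENNReal.ofReal ((1 + s / a) ^ s) * ∑' (c) (d), rowMajorant (s / 2) N (σ • z) c d :=
        tsum_poincareWeight_le_tsum_rowMajorant ha (by linarith) hN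
          (injective_row_mul_right hg σ⁻¹) _
    _ ≤ _ := by
        gcongr
        exact tsum_rowMajorant_le (by linarith) hN hσ

end OrbitSum

section PoincareSeries

open scoped ENNReal UpperHalfPlane

lemma entry_mul_add_entry (γ : SL2Z) (z : ℍ) :
    entry γ 1 0 * z + entry γ 1 1 = UpperHalfPlane.denom γ z :=
  (ModularGroup.denom_apply γ z).symm

lemma act_coe (γ : SL2Z) (z : ℍ) : act γ z = ↑(γ • z) := by
  rw [UpperHalfPlane.coe_specialLinearGroup_apply]
  simp [act, entry]

lemma HasFiniteOrderChar.norm_eq_one {Γ : Subgroup SL2Z} {χ : Γ →* ℂˣ}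
    (hχ : HasFiniteOrderChar Γ χ) (γ : Γ) : ‖(χ γ : ℂ)‖ = 1 := by
  obtain ⟨n, hn, pow_eq_one⟩ := hχ
  have coe_pow_eq_one : (χ γ : ℂ) ^ n = 1 := by
    rw [← Units.val_pow_eq_pow_val, pow_eq_one, Units.val_one]
  exact Complex.norm_eq_one_of_pow_eq_one coe_pow_eq_one hn.ne'

lemma injective_row_of_existsUnique {Γ : Subgroup SL2Z} {R : Set Γ}
    (hR : ∀ γ : Γ, ∃! δ : Γ, δ ∈ R ∧ ∃ τ : Γ, entry (τ : SL2Z) 1 0 = 0 ∧ γ = τ * δ) :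
    Function.Injective fun δ : R ↦ ((δ : Γ) : SL2Z) 1 := by
  rintro ⟨δ₁, h₁⟩ ⟨δ₂, h₂⟩ row_eq
  have row_mul_inv : ((δ₁ : SL2Z) * (δ₂ : SL2Z)⁻¹) 1 = (1 : SL2Z) 1 := by
    calc ((δ₁ : SL2Z) * (δ₂ : SL2Z)⁻¹) 1
        = Matrix.vecMul ((δ₁ : SL2Z) 1) ↑(δ₂ : SL2Z)⁻¹ := Matrix.mul_apply_eq_vecMul _ _ 1
      _ = Matrix.vecMul ((δ₂ : SL2Z) 1) ↑(δ₂ : SL2Z)⁻¹ := congrArg (Matrix.vecMul · _) row_eq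
      _ = ((δ₂ : SL2Z) * (δ₂ : SL2Z)⁻¹) 1 := (Matrix.mul_apply_eq_vecMul _ _ 1).symm
      _ = (1 : SL2Z) 1 := by rw [mul_inv_cancel]
  have entry_eq_zero : entry ((δ₁ * δ₂⁻¹ : Γ) : SL2Z) 1 0 = 0 :=
    congrArg Int.cast (congrFun row_mul_inv 0) |>.trans Int.cast_zero
  exact Subtype.ext <| (hR δ₁).unique ⟨h₁, 1, by simp [entry], (one_mul _).symm⟩
    ⟨h₂, δ₁ * δ₂⁻¹, entry_eq_zero, (inv_mul_cancel_right _ _).symm⟩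

variable {Γ : Subgroup SL2Z} {η : Γ → ℂ → ℂ} {χ : Γ →* ℂˣ} {m : ℝ} {j : ℕ}

lemma IsMultiplierSystem.sq_eq_denom (hη : IsMultiplierSystem Γ η) (γ : Γ) (z : ℍ) :
    η γ z ^ 2 = UpperHalfPlane.denom (γ : SL2Z) z :=
  (hη.sq γ z z.im_pos).trans (entry_mul_add_entry γ z)

lemma IsMultiplierSystem.norm_zpow (hη : IsMultiplierSystem Γ η) (hm : m = 5 / 2 + j) (γ : Γ)
    (z : ℍ) :
    ‖η γ z ^ (-(5 + 2 * (j : ℤ)))‖ = ‖UpperHalfPlane.denom (γ : SL2Z) z‖ ^ (-m) := by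
  rw [← hη.sq_eq_denom, norm_pow, ← Real.rpow_natCast_mul (norm_nonneg _), _root_.norm_zpow,
    ← Real.rpow_intCast, hm]
  push_cast
  ring_nf

lemma norm_psiTerm (hη : IsMultiplierSystem Γ η) (hχ : ∀ γ, ‖(χ γ : ℂ)‖ = 1)
    (hm : m = 5 / 2 + j) (h n : ℕ) (γ : Γ) (z : ℍ) :
    ‖psiTerm Γ η χ j h n γ z‖ =
      Real.exp (-(2 * π / h * (n * ((γ : SL2Z) • z).im))) *
        ‖UpperHalfPlane.denom (γ : SL2Z) z‖ ^ (-m) := by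
  have exponent_eq (w : ℂ) : 2 * (π : ℂ) * I * (n : ℂ) * w / (h : ℂ) =
      ((2 * π / h * n : ℝ) : ℂ) * (I * w) := by
    push_cast
    ring
  rw [psiTerm, norm_mul, norm_mul, hη.norm_zpow hm, RCLike.norm_conj, hχ, one_mul,
    Complex.norm_exp, act_coe, exponent_eq, Complex.re_ofReal_mul, Complex.I_mul_re,
    UpperHalfPlane.coe_im]
  ring_nf

lemma norm_psiTerm_le (hη : IsMultiplierSystem Γ η) (hχ : ∀ γ, ‖(χ γ : ℂ)‖ = 1)
    (hm : m = 5 / 2 + j) (h n : ℕ) (γ : Γ) (z : ℍ) :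
    ‖psiTerm Γ η χ j h n γ z‖ ≤ ‖UpperHalfPlane.denom (γ : SL2Z) z‖ ^ (-m) := by
  rw [norm_psiTerm hη hχ hm]
  refine mul_le_of_le_one_left (by positivity) (Real.exp_le_one_iff.2 (neg_nonpos.2 ?_))
  positivity

lemma ofReal_mul_enorm_psiTerm (hη : IsMultiplierSystem Γ η) (hχ : ∀ γ, ‖(χ γ : ℂ)‖ = 1)
    (hm : m = 5 / 2 + j) (h n : ℕ) (γ : Γ) (z : ℍ) :
    ENNReal.ofReal ((n : ℝ) ^ (m / 2 - 1) * z.im ^ (m / 2)) * ‖psiTerm Γ η χ j h n γ z‖ₑ =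
      poincareWeight (2 * π / h) (m / 2) n ((γ : SL2Z) • z) := by
  have him := z.im_pos
  have im_rpow : ((γ : SL2Z) • z).im ^ (m / 2) =
      z.im ^ (m / 2) * ‖UpperHalfPlane.denom (γ : SL2Z) z‖ ^ (-m) := by
    rw [ModularGroup.im_smul_eq_div_normSq, Complex.normSq_eq_norm_sq,
      Real.div_rpow him.le (by positivity), ← Real.rpow_natCast_mul (norm_nonneg _),
      Real.rpow_neg (norm_nonneg _), div_eq_mul_inv]
    push_cast
    ring_nf
  rw [poincareWeight, ← ofReal_norm, ← ENNReal.ofReal_mul (by positivity),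
    norm_psiTerm hη hχ hm, im_rpow]
  ring_nf

theorem exists_norm_psi_le (hη : IsMultiplierSystem Γ η) (hχ : ∀ γ, ‖(χ γ : ℂ)‖ = 1)
    (hm : m = 5 / 2 + j) {h : ℕ} (hh : 0 < h) {R : Set Γ}
    (hR : Function.Injective fun δ : R ↦ ((δ : Γ) : SL2Z) 1) :
    ∃ C : ℝ, ∀ n : ℕ, 1 ≤ n → ∀ z : ℍ,
      (n : ℝ) ^ (m / 2 - 1) * z.im ^ (m / 2) * ‖psi Γ η χ j h R n z‖ ≤ C := by
  have one_lt_half : 1 < m / 2 := by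
    have : (0 : ℝ) ≤ j := j.cast_nonneg
    linarith
  obtain ⟨C, hC_ne_top, hC⟩ := exists_tsum_poincareWeight_smul_le (ι := R) (s := m / 2)
    (a := 2 * π / h) (by positivity) one_lt_half
  refine ⟨C.toReal, fun n hn z ↦ (ENNReal.ofReal_le_iff_le_toReal hC_ne_top).1 ?_⟩
  calc ENNReal.ofReal ((n : ℝ) ^ (m / 2 - 1) * z.im ^ (m / 2) * ‖psi Γ η χ j h R n z‖)
      = ENNReal.ofReal ((n : ℝ) ^ (m / 2 - 1) * z.im ^ (m / 2)) * ‖psi Γ η χ j h R n z‖ₑ := by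
        rw [ENNReal.ofReal_mul (by positivity), ofReal_norm]
    _ ≤ ENNReal.ofReal ((n : ℝ) ^ (m / 2 - 1) * z.im ^ (m / 2)) *
          ∑' δ : R, ‖psiTerm Γ η χ j h n δ z‖ₑ := by
        gcongr
        exact enorm_tsum_le_tsum_enorm
    _ = ∑' δ : R, poincareWeight (2 * π / h) (m / 2) n (((δ : Γ) : SL2Z) • z) := by
        simp only [← ENNReal.tsum_mul_left, ofReal_mul_enorm_psiTerm hη hχ hm]
    _ ≤ C := hC n (mod_cast hn) z _ hR

lemma isOpen_UH : IsOpen UH := UpperHalfPlane.isOpen_upperHalfPlaneSet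

lemma differentiableAt_psiTerm (hη : IsMultiplierSystem Γ η) (χ : Γ →* ℂˣ) (j h n : ℕ) (γ : Γ)
    {z : ℂ} (hz : z ∈ UH) : DifferentiableAt ℂ (psiTerm Γ η χ j h n γ) z := by
  have denom_ne_zero : entry γ 1 0 * z + entry γ 1 1 ≠ 0 :=
    entry_mul_add_entry γ ⟨z, hz⟩ ▸ UpperHalfPlane.denom_ne_zero _ _
  have eta_ne_zero : η γ z ≠ 0 := by
    rw [← hη.sq γ z hz] at denom_ne_zero
    exact pow_ne_zero_iff two_ne_zero |>.1 denom_ne_zero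
  have differentiableAt_eta : DifferentiableAt ℂ (η γ) z :=
    (hη.holo γ).differentiableAt (isOpen_UH.mem_nhds hz)
  have differentiableAt_act : DifferentiableAt ℂ (act γ) z := by
    unfold act
    fun_prop (disch := assumption)
  unfold psiTerm
  exact (by fun_prop : DifferentiableAt ℂ _ z).mul
    (differentiableAt_eta.zpow (Or.inl eta_ne_zero))

lemma summableLocallyUniformlyOn_psiTerm (hη : IsMultiplierSystem Γ η)
    (hχ : ∀ γ, ‖(χ γ : ℂ)‖ = 1) (hm : m = 5 / 2 + j) (h n : ℕ) {R : Set Γ}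
    (hR : Function.Injective fun δ : R ↦ ((δ : Γ) : SL2Z) 1) :
    SummableLocallyUniformlyOn (fun δ : R ↦ psiTerm Γ η χ j h n δ) UH := by
  have two_lt : 2 < m := by
    have : (0 : ℝ) ≤ j := j.cast_nonneg
    linarith
  refine SummableLocallyUniformlyOn_of_locally_bounded isOpen_UH fun K hK hK_compact ↦ ?_
  have preimage_compact : IsCompact ((↑) ⁻¹' K : Set ℍ) :=
    UpperHalfPlane.isOpenEmbedding_coe.isInducing.isCompact_preimage_iff
      (fun z hz ↦ ⟨⟨z, hK hz⟩, rfl⟩) |>.2 hK_compact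
  obtain ⟨A, B, hB, subset_strip⟩ :=
    UpperHalfPlane.subset_verticalStrip_of_isCompact preimage_compact
  refine ⟨_, ((EisensteinSeries.summable_one_div_norm_rpow two_lt).comp_injective hR).mul_left
    (EisensteinSeries.r ⟨⟨A, B⟩, hB⟩ ^ (-m)), fun δ z hz ↦ ?_⟩
  set τ : ℍ := ⟨z, hK hz⟩
  calc ‖psiTerm Γ η χ j h n δ τ‖
      ≤ ‖UpperHalfPlane.denom ((δ : Γ) : SL2Z) τ‖ ^ (-m) := norm_psiTerm_le hη hχ hm h n δ τ
    _ ≤ _ := by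
        rw [ModularGroup.denom_apply]
        exact EisensteinSeries.summand_bound_of_mem_verticalStrip (by linarith)
          (((δ : Γ) : SL2Z) 1) hB (subset_strip hz)

theorem differentiableOn_psi (hη : IsMultiplierSystem Γ η) (hχ : ∀ γ, ‖(χ γ : ℂ)‖ = 1)
    (j h n : ℕ) {R : Set Γ} (hR : Function.Injective fun δ : R ↦ ((δ : Γ) : SL2Z) 1) :
    DifferentiableOn ℂ (psi Γ η χ j h R n) UH :=
  (summableLocallyUniformlyOn_psiTerm hη hχ rfl h n hR).differentiableOn isOpen_UH
    fun δ _ hz ↦ differentiableAt_psiTerm hη χ j h n δ hz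

end PoincareSeries

section CauchyEstimate

variable {f : ℂ → ℂ} {s C : ℝ}

lemma half_im_le_of_mem_closedBall {ξ z : ℂ} (hz : z ∈ Metric.closedBall ξ (ξ.im / 2)) :
    ξ.im / 2 ≤ z.im := by
  have abs_im_sub_le := (Complex.abs_im_le_norm (z - ξ)).trans (mem_closedBall_iff_norm.1 hz)
  rw [Complex.sub_im, abs_le] at abs_im_sub_le
  linarith

theorem im_rpow_mul_norm_iteratedDeriv_le (hs : 0 ≤ s) (hf : DifferentiableOn ℂ f UH)
    (hC : ∀ z ∈ UH, z.im ^ s * ‖f z‖ ≤ C) (k : ℕ) {ξ : ℂ} (hξ : ξ ∈ UH) :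
    ξ.im ^ (s + k) * ‖iteratedDeriv k f ξ‖ ≤ k.factorial * 2 ^ (s + k) * C := by
  have him : 0 < ξ.im := hξ
  have closedBall_subset : Metric.closedBall ξ (ξ.im / 2) ⊆ UH := fun z hz ↦
    (half_pos him).trans_le (half_im_le_of_mem_closedBall hz)
  have diffContOnCl : DiffContOnCl ℂ f (Metric.ball ξ (ξ.im / 2)) :=
    (hf.mono (Metric.closure_ball_subset_closedBall.trans closedBall_subset)).diffContOnCl
  have norm_le_on_sphere : ∀ z ∈ Metric.sphere ξ (ξ.im / 2), ‖f z‖ ≤ C / (ξ.im / 2) ^ s := by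
    intro z hz
    have hz' := Metric.sphere_subset_closedBall hz
    rw [le_div_iff₀' (by positivity)]
    calc (ξ.im / 2) ^ s * ‖f z‖ ≤ z.im ^ s * ‖f z‖ := by
          gcongr
          exact half_im_le_of_mem_closedBall hz'
      _ ≤ C := hC z (closedBall_subset hz')
  calc ξ.im ^ (s + k) * ‖iteratedDeriv k f ξ‖
      ≤ ξ.im ^ (s + k) * (k.factorial * (C / (ξ.im / 2) ^ s) / (ξ.im / 2) ^ k) := by
        gcongr
        exact Complex.norm_iteratedDeriv_le_of_forall_mem_sphere_norm_le k (half_pos him)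
          diffContOnCl norm_le_on_sphere
    _ = ξ.im ^ (s + k) * (k.factorial * C / (ξ.im / 2) ^ (s + k)) := by
        rw [Real.rpow_add_natCast (x := ξ.im / 2) (by positivity),
          ← mul_div_assoc (k.factorial : ℝ), div_div]
    _ = k.factorial * 2 ^ (s + k) * C := by
        rw [Real.div_rpow him.le two_pos.le]
        field_simp

end CauchyEstimate

theorem stmt18_general {Γ : Subgroup SL2Z} {η : Γ → ℂ → ℂ} (hη : IsMultiplierSystem Γ η)
    {χ : Γ →* ℂˣ} (hχ : ∀ γ, ‖(χ γ : ℂ)‖ = 1) {m : ℝ} {j : ℕ} (hm : m = 5 / 2 + j)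
    {h : ℕ} (hh : 0 < h) {R : Set Γ}
    (hR : Function.Injective fun δ : R ↦ ((δ : Γ) : SL2Z) 1) (k : ℕ) :
    ∃ C : ℝ, ∀ n : ℕ, ∀ ξ ∈ UH,
      ((n : ℝ) + 1) ^ (m / 2 - 1) * ξ.im ^ (m / 2 + (k : ℝ)) *
        ‖iteratedDeriv k (psi Γ η χ j h R (n + 1)) ξ‖ ≤ C := by
  obtain ⟨C, hC⟩ := exists_norm_psi_le hη hχ hm hh hR
  refine ⟨k.factorial * 2 ^ (m / 2 + k) * C, fun n ξ hξ ↦ ?_⟩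
  have hm_nonneg : 0 ≤ m / 2 := by
    rw [hm]
    positivity
  have hN : 0 < ((n : ℝ) + 1) ^ (m / 2 - 1) := by positivity
  have psi_le : ∀ z ∈ UH, z.im ^ (m / 2) * ‖psi Γ η χ j h R (n + 1) z‖ ≤
      C / ((n : ℝ) + 1) ^ (m / 2 - 1) := fun z hz ↦ by
    rw [le_div_iff₀' hN, ← mul_assoc]
    exact_mod_cast hC (n + 1) n.succ_pos ⟨z, hz⟩
  have deriv_le := im_rpow_mul_norm_iteratedDeriv_le hm_nonneg
    (differentiableOn_psi hη hχ j h (n + 1) hR) psi_le k hξ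
  rwa [mul_div_assoc', le_div_iff₀' hN, ← mul_assoc] at deriv_le

theorem stmt18 (Γ : Subgroup SL2Z) (hΓ : Γ.FiniteIndex)
    (hI : ∀ γ : Γ, ((γ : SL2Z) : Matrix (Fin 2) (Fin 2) ℤ) ≠ -1)
    (η : Γ → ℂ → ℂ) (hη : IsMultiplierSystem Γ η)
    (χ : Γ →* ℂˣ) (hχ : HasFiniteOrderChar Γ χ)
    (m : ℝ) (j : ℕ) (hm : m = 5 / 2 + j)
    (h : ℕ) (hh : 0 < h)
    (hT : ∃ γ : Γ, ((γ : SL2Z) : Matrix (Fin 2) (Fin 2) ℤ) = !![1, (h : ℤ); 0, 1])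
    (hGammaInf : ∀ γ : Γ, entry (γ : SL2Z) 1 0 = 0 ↔
      ∃ n : ℤ, ((γ : SL2Z) : Matrix (Fin 2) (Fin 2) ℤ) = !![1, n * (h : ℤ); 0, 1])
    (hηInf : ∀ γ : Γ, entry (γ : SL2Z) 1 0 = 0 → ∀ z ∈ UH,
      η γ z ^ (-(5 + 2 * (j : ℤ))) = (χ γ : ℂ))
    (R : Set Γ)
    (hR : ∀ γ : Γ, ∃! δ : Γ, δ ∈ R ∧ ∃ τ : Γ, entry (τ : SL2Z) 1 0 = 0 ∧ γ = τ * δ) (k : ℕ) :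
    ∃ C : ℝ, ∀ n : ℕ, ∀ ξ ∈ UH,
      ((n : ℝ) + 1) ^ (m / 2 - 1) * ξ.im ^ (m / 2 + (k : ℝ)) *
        ‖iteratedDeriv k (psi Γ η χ j h R (n + 1)) ξ‖ ≤ C :=
  stmt18_general hη hχ.norm_eq_one hm hh (injective_row_of_existsUnique hR) k
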